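/- Let (G,C) be a strongly connected inhomogeneous Mauldin–Williams graph in ℝ^d satisfying the SOSC, with the sets X_i having pairwise disjoint interiors, such that ∫₀^∞ e^{−s₀(G)t} N_{e^{−t}}(C_i) dt < ∞ for all i ∈ V, and set K^C = ⋃_{i∈V} K_i^C. If G_M = ℝ, then lim_{t→∞} e^{−s₀(G)t} N_{e^{−t}}(K^C) exists and equals Σ_{i∈V} h_i, where for each i ∈ V, h_i > 0 is the constant with lim_{t→∞} N_{e^{−t}}(K_i^C)/(h_i e^{s₀(G)t}) = 1. -/

import Mathlib

open Set Filter Topology MeasureTheory Metric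

noncomputable section

/-- Points of `ℝ^d`. -/
abbrev Pt (d : ℕ) := EuclideanSpace ℝ (Fin d)

/-- The `r`-covering number of `A ⊆ ℝ^d`: the least number of closed balls of
radius `r` needed to cover `A`. -/
noncomputable def coveringNumber {d : ℕ} (A : Set (Pt d)) (r : ℝ) : ℕ :=
  sInf {k : ℕ | ∃ c : Fin k → Pt d, A ⊆ ⋃ i, Metric.closedBall (c i) r}

/-- A Mauldin–Williams graph in `ℝ^d` over a finite directed multigraph with
vertex type `V` and edge type `E`: each vertex `i` carries a non-empty compact
set `X i` equal to the closure of its interior, and each edge `e` carries a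
contractive similarity `S e` of ratio `r e ∈ (0,1)` mapping `X (term e)` into
`X (init e)`. -/
structure MWGraph (d : ℕ) (V E : Type) [Fintype V] [Fintype E] where
  init : E → V
  term : E → V
  X : V → Set (Pt d)
  S : E → Pt d → Pt d
  r : E → ℝ
  X_nonempty : ∀ i, (X i).Nonempty
  X_compact : ∀ i, IsCompact (X i)
  X_regular : ∀ i, closure (interior (X i)) = X i
  r_pos : ∀ e, 0 < r e
  r_lt_one : ∀ e, r e < 1
  S_maps : ∀ e, Set.MapsTo (S e) (X (term e)) (X (init e))
  S_sim : ∀ e x y, dist (S e x) (S e y) = r e * dist x y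

namespace MWGraph

variable {d : ℕ} {V E : Type} [Fintype V] [Fintype E]

variable (G : MWGraph d V E)

/-- `G.IsPathFrom j γ` holds iff the list of edges `γ` is a directed path
starting at vertex `j`. -/
def IsPathFrom : V → List E → Prop
  | _, [] => True
  | j, e :: es => G.init e = j ∧ IsPathFrom (G.term e) es

/-- Terminal vertex of the path `γ` starting at `j`. -/
def pathTerm : V → List E → V
  | j, [] => j
  | _, e :: es => pathTerm (G.term e) es

/-- `S_γ = S_{e₁} ∘ ⋯ ∘ S_{eₙ}` (with `S_∅ = id`). -/
def pathMap : List E → Pt d → Pt d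
  | [] => id
  | e :: es => G.S e ∘ pathMap es

/-- `r_γ = r_{e₁} ⋯ r_{eₙ}` (with `r_∅ = 1`). -/
def pathRatio (γ : List E) : ℝ := (γ.map G.r).prod

/-- The underlying multigraph is strongly connected: for every ordered pair of
vertices there is a (non-empty) directed path from the first to the second. -/
def StronglyConnected : Prop :=
  ∀ i j : V, ∃ γ : List E, γ ≠ [] ∧ G.IsPathFrom i γ ∧ G.pathTerm i γ = j

/-- `K` is the list of graph-directed self-similar sets of `G`: the unique list
of non-empty compact sets with `K i = ⋃_{e ∈ E_i} S_e (K (term e))`. -/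
def IsAttractor (K : V → Set (Pt d)) : Prop :=
  (∀ i, IsCompact (K i)) ∧ (∀ i, (K i).Nonempty) ∧
    ∀ i, K i = ⋃ e ∈ {e : E | G.init e = i}, G.S e '' K (G.term e)

/-- `C` is an admissible list of condensation sets: compact subsets of the `X i`. -/
def IsCondensation (C : V → Set (Pt d)) : Prop :=
  ∀ i, IsCompact (C i) ∧ C i ⊆ G.X i

/-- `K` is the list of inhomogeneous graph-directed self-similar sets of `(G, C)`:
the unique list of non-empty compact sets with
`K i = ⋃_{e ∈ E_i} S_e (K (term e)) ∪ C i`. -/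
def IsInhomAttractor (C : V → Set (Pt d)) (K : V → Set (Pt d)) : Prop :=
  (∀ i, IsCompact (K i)) ∧ (∀ i, (K i).Nonempty) ∧
    ∀ i, K i = (⋃ e ∈ {e : E | G.init e = i}, G.S e '' K (G.term e)) ∪ C i

/-- `G` satisfies the open set condition with the open sets `U`. -/
def IsOSCWith (U : V → Set (Pt d)) : Prop :=
  (∀ i, (U i).Nonempty) ∧ (∀ i, IsOpen (U i)) ∧ (∀ i, Bornology.IsBounded (U i)) ∧
    (∀ i, U i ⊆ G.X i) ∧
    (∀ i, (⋃ e ∈ {e : E | G.init e = i}, G.S e '' U (G.term e)) ⊆ U i) ∧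
    ∀ e e' : E, G.init e = G.init e' → e ≠ e' →
      Disjoint (G.S e '' U (G.term e)) (G.S e' '' U (G.term e'))

/-- The set `{-log r_γ : γ a directed cycle of G}`. -/
def cycleSet : Set ℝ :=
  {x : ℝ | ∃ (j : V) (γ : List E), γ ≠ [] ∧ G.IsPathFrom j γ ∧ G.pathTerm j γ = j ∧
    x = -Real.log (G.pathRatio γ)}

/-- `G_M`, the smallest closed additive subgroup of `ℝ` containing
`{-log r_γ : γ a directed cycle}`. -/
def GM : Set ℝ := closure ((AddSubgroup.closure (G.cycleSet) : AddSubgroup ℝ) : Set ℝ)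

variable [DecidableEq V]

/-- The matrix `A_G^s` with entries `(A_G^s)_{ij} = Σ_{e ∈ E_{ij}} r_e^s`. -/
def Amatrix (s : ℝ) : Matrix V V ℝ :=
  Matrix.of fun i j => ∑ e : E, if G.init e = i ∧ G.term e = j then G.r e ^ s else 0

end MWGraph

/-- Spectral radius of a real square matrix: the largest modulus of a complex
eigenvalue. -/
noncomputable def matrixSpectralRadius {n : Type} [Fintype n] [DecidableEq n]
    (A : Matrix n n ℝ) : ℝ :=
  sSup {x : ℝ | ∃ μ : ℂ, μ ∈ spectrum ℂ (A.map (fun a : ℝ => (a : ℂ))) ∧ x = ‖μ‖}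

/-- `s` is the (unique) exponent `s ≥ 0` with `ρ(A_G^s) = 1`, i.e. `s = s₀(G)`. -/
def IsS0 {d : ℕ} {V E : Type} [Fintype V] [Fintype E] [DecidableEq V]
    (G : MWGraph d V E) (s : ℝ) : Prop :=
  0 ≤ s ∧ matrixSpectralRadius (G.Amatrix s) = 1

/-! Normalise covering numbers by the gauge `ε ^ s`, and let `D i` be the infimum, over
compact `F ⊆ U i`, of the upper content of `K_i^C \ F`. The condensation sets have content zero:
their normalised covering numbers are integrable in `t = -log ε` and drop by at most a constant
factor per unit of time. Self-similarity therefore gives `D ≤ A_G^s D`, and since `A_G^s` is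
irreducible with spectral radius at most one, Perron–Frobenius theory yields `A_G^s D = D`.

By the SOSC some cylinder `S_γ(K_{t(γ)}^C)` is a compact subset of `U i`. Deleting it does not
change `D i`, yet self-similarity shows that the deletion lowers `D i` by `r_γ ^ s * D t(γ)`.
Hence `D t(γ) = 0`, and strong connectivity spreads this to `D = 0`. Up to sets of arbitrarily
small content, the `K_i^C` are thus compact subsets of the pairwise disjoint `U i`, and the
covering numbers of disjoint compact sets are additive at small scales. -/

open scoped NNReal ENNReal Matrix

section ExternalCoveringNumber

variable {X Y : Type*} [PseudoEMetricSpace X] [PseudoEMetricSpace Y] {ε : ℝ≥0}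

lemma exists_isCover_encard_eq (ε : ℝ≥0) (A : Set X) :
    ∃ t, IsCover ε A t ∧ t.encard = externalCoveringNumber ε A := by
  have : Nonempty {t : Set X // IsCover ε A t} := ⟨⟨A, .rfl⟩⟩
  obtain ⟨⟨t, ht⟩, hteq⟩ := ENat.exists_eq_iInf fun t : {t : Set X // IsCover ε A t} => t.1.encard
  exact ⟨t, ht, by rw [hteq, externalCoveringNumber, iInf_subtype]⟩

lemma isCover_iUnion {ι : Type*} {A N : ι → Set X} (h : ∀ i, IsCover ε (A i) (N i)) :
    IsCover ε (⋃ i, A i) (⋃ i, N i) := by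
  intro a ha
  obtain ⟨i, hi⟩ := mem_iUnion.1 ha
  exact ((h i).mono (subset_iUnion N i)) hi

lemma externalCoveringNumber_iUnion_le {ι : Type*} [Fintype ι] (ε : ℝ≥0) (A : ι → Set X) :
    externalCoveringNumber ε (⋃ i, A i) ≤ ∑ i, externalCoveringNumber ε (A i) := by
  choose t ht hcard using fun i => exists_isCover_encard_eq ε (A i)
  simp only [← hcard]
  exact (isCover_iUnion ht).externalCoveringNumber_le_encard.trans (encard_iUnion_le_of_fintype t)

lemma externalCoveringNumber_union_le (ε : ℝ≥0) (A B : Set X) :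
    externalCoveringNumber ε (A ∪ B) ≤
      externalCoveringNumber ε A + externalCoveringNumber ε B := by
  simpa [union_eq_iUnion, add_comm] using
    externalCoveringNumber_iUnion_le ε fun b => cond b A B

lemma externalCoveringNumber_image_le {f : X → Y} {K : ℝ≥0} (hf : LipschitzWith K f)
    (ε : ℝ≥0) (A : Set X) :
    externalCoveringNumber (K * ε) (f '' A) ≤ externalCoveringNumber ε A := by
  obtain ⟨t, ht, hcard⟩ := exists_isCover_encard_eq ε A
  rw [← hcard]
  exact (ht.image_lipschitz hf).externalCoveringNumber_le_encard.trans (encard_image_le f t)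

lemma sum_externalCoveringNumber_le_iUnion {ι : Type*} [Fintype ι] {A : ι → Set X}
    (hA : Pairwise fun i j => ∀ x ∈ A i, ∀ y ∈ A j, (ε + ε : ℝ≥0∞) < edist x y) :
    ∑ i, externalCoveringNumber ε (A i) ≤ externalCoveringNumber ε (⋃ i, A i) := by
  obtain ⟨t, ht, hcard⟩ := exists_isCover_encard_eq ε (⋃ i, A i)
  let T (i : ι) : Set X := {x ∈ t | ∃ a ∈ A i, edist a x ≤ ε}
  have hT : ∀ i, IsCover ε (A i) (T i) := fun i a ha =>
    let ⟨x, hx, hax⟩ := ht (mem_iUnion_of_mem i ha)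
    ⟨x, ⟨hx, a, ha, hax⟩, hax⟩
  have hdisj : Pairwise (Function.onFun Disjoint T) := by
    refine fun i j hij => disjoint_left.2 ?_
    rintro x ⟨-, a, ha, hax⟩ ⟨-, b, hb, hbx⟩
    exact (hA hij a ha b hb).not_ge
      ((edist_triangle_right a b x).trans (add_le_add hax hbx))
  calc ∑ i, externalCoveringNumber ε (A i)
      ≤ ∑ i, (T i).encard := Finset.sum_le_sum fun i _ => (hT i).externalCoveringNumber_le_encard
    _ = (⋃ i, T i).encard := by
        rw [encard_iUnion_of_finite hdisj, finsum_eq_sum_of_fintype]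
    _ ≤ t.encard := encard_le_encard (iUnion_subset fun i => sep_subset _ _)
    _ = externalCoveringNumber ε (⋃ i, A i) := hcard

lemma eventually_sum_externalCoveringNumber_le_iUnion {ι : Type*} [Fintype ι] {A : ι → Set X}
    (hA : Pairwise fun i j => AreSeparated (A i) (A j)) :
    ∀ᶠ ε in 𝓝 (0 : ℝ≥0),
      ∑ i, externalCoveringNumber ε (A i) ≤ externalCoveringNumber ε (⋃ i, A i) := by
  have hsep : ∀ i j, i ≠ j → ∀ᶠ ε : ℝ≥0 in 𝓝 0,
      ∀ x ∈ A i, ∀ y ∈ A j, (ε + ε : ℝ≥0∞) < edist x y := by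
    intro i j hij
    obtain ⟨δ, hδ, hle⟩ := hA hij
    have hadd : Tendsto (fun ε : ℝ≥0 => (ε + ε : ℝ≥0∞)) (𝓝 0) (𝓝 0) := by
      have hcoe : Tendsto (fun ε : ℝ≥0 => (ε : ℝ≥0∞)) (𝓝 0) (𝓝 0) :=
        ENNReal.tendsto_coe.2 tendsto_id
      simpa using hcoe.add hcoe
    filter_upwards [hadd.eventually_lt_const hδ.bot_lt] with ε hε x hx y hy
    exact hε.trans_le (hle x hx y hy)
  have hall := eventually_all.2 fun i => eventually_all.2 fun j =>
    eventually_imp_distrib_left.2 (hsep i j)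
  filter_upwards [hall] with ε hε
  exact sum_externalCoveringNumber_le_iUnion fun i j hij => hε i j hij

lemma areSeparated_of_isCompact_of_isClosed {A B : Set X} (hA : IsCompact A) (hB : IsClosed B)
    (hAB : Disjoint A B) : AreSeparated A B := by
  obtain ⟨δ, hδ, hlt⟩ := exists_pos_forall_lt_edist hA hB hAB
  exact ⟨δ, ENNReal.coe_ne_zero.2 hδ.ne', fun x hx y hy => (hlt x hx y hy).le⟩

end ExternalCoveringNumber

section LimsupAdd

variable {ι : Type*} {f : Filter ι} {u v : ι → ℝ≥0∞}

lemma ennreal_le_add_of_forall_lt {a b c : ℝ≥0∞} (h : ∀ a' > a, ∀ b' > b, c ≤ a' + b') :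
    c ≤ a + b := by
  refine ENNReal.le_of_forall_pos_le_add fun ε hε hab => ?_
  obtain ⟨ha, hb⟩ := ENNReal.add_lt_top.1 hab
  have hε2 : (ε / 2 : ℝ≥0∞) ≠ 0 := by simpa using hε.ne'
  calc c ≤ (a + ε / 2) + (b + ε / 2) :=
        h _ (ENNReal.lt_add_right ha.ne hε2) _ (ENNReal.lt_add_right hb.ne hε2)
    _ = a + b + ε := by rw [add_add_add_comm, ENNReal.add_halves]

lemma ennreal_limsup_add_le : limsup (u + v) f ≤ limsup u f + limsup v f := by
  refine ennreal_le_add_of_forall_lt fun a ha b hb => limsup_le_of_le (h := ?_)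
  filter_upwards [eventually_lt_of_limsup_lt ha, eventually_lt_of_limsup_lt hb] with x hxa hxb
  exact add_le_add hxa.le hxb.le

lemma ennreal_liminf_add_le : liminf (u + v) f ≤ liminf u f + limsup v f := by
  refine ennreal_le_add_of_forall_lt fun a ha b hb => liminf_le_of_frequently_le' ?_
  refine ((frequently_lt_of_liminf_lt (h := ha)).and_eventually
    (eventually_lt_of_limsup_lt hb)).mono fun x hx => ?_
  exact add_le_add hx.1.le hx.2.le

lemma ennreal_limsup_sum_le {κ : Type*} (T : Finset κ) (u : κ → ι → ℝ≥0∞) :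
    limsup (∑ k ∈ T, u k) f ≤ ∑ k ∈ T, limsup (u k) f := by
  classical
  induction T using Finset.induction_on with
  | empty => exact limsup_const_bot.le
  | insert k T hk ih =>
    rw [Finset.sum_insert hk, Finset.sum_insert hk]
    exact ennreal_limsup_add_le.trans (add_le_add_right ih _)

end LimsupAdd

section Content

/-- The covering number of `A` at scale `ε`, normalised by the gauge `ε ^ s`; at `ε = e^{-t}` this
is `e^{-st} N_{e^{-t}}(A)`. -/
def scaledCoveringNumber {X : Type*} [PseudoEMetricSpace X] (s : ℝ) (A : Set X) (ε : ℝ≥0) :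
    ℝ≥0∞ :=
  (ε : ℝ≥0∞) ^ s * externalCoveringNumber ε A

/-- The upper `s`-dimensional Minkowski content of `A`, normalised by covering numbers. -/
def upperContent {X : Type*} [PseudoEMetricSpace X] (s : ℝ) (A : Set X) : ℝ≥0∞ :=
  limsup (scaledCoveringNumber s A) (𝓝[>] 0)

/-- The part of the upper content of `A` that cannot be removed by deleting from `A` a compact
subset of `W`. -/
def escapingContent {X : Type*} [PseudoEMetricSpace X] (s : ℝ) (W A : Set X) : ℝ≥0∞ :=
  ⨅ F : {F : Set X // IsCompact F ∧ F ⊆ W}, upperContent s (A \ F)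

variable {X Y : Type*} [PseudoEMetricSpace X] [PseudoEMetricSpace Y] {s : ℝ} {A B F W : Set X}

lemma scaledCoveringNumber_mono (s : ℝ) (h : A ⊆ B) :
    scaledCoveringNumber s A ≤ scaledCoveringNumber s B := fun _ =>
  mul_le_mul_right (ENat.toENNReal_mono (externalCoveringNumber_mono_set h)) _

lemma scaledCoveringNumber_union_le (s : ℝ) (A B : Set X) :
    scaledCoveringNumber s (A ∪ B) ≤ scaledCoveringNumber s A + scaledCoveringNumber s B := by
  intro ε
  simp only [Pi.add_apply, scaledCoveringNumber, ← mul_add, ← ENat.toENNReal_add]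
  gcongr
  exact externalCoveringNumber_union_le ε A B

lemma sum_scaledCoveringNumber {ι : Type*} [Fintype ι] (s : ℝ) (A : ι → Set X) (ε : ℝ≥0) :
    ∑ i, scaledCoveringNumber s (A i) ε =
      (ε : ℝ≥0∞) ^ s * (∑ i, externalCoveringNumber ε (A i) : ℕ∞) := by
  simp only [scaledCoveringNumber, ← Finset.mul_sum]
  exact congrArg _ (map_sum ENat.toENNRealRingHom _ _).symm

lemma scaledCoveringNumber_iUnion_le {ι : Type*} [Fintype ι] (s : ℝ) (A : ι → Set X) :
    scaledCoveringNumber s (⋃ i, A i) ≤ ∑ i, scaledCoveringNumber s (A i) := by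
  intro ε
  rw [Finset.sum_apply, sum_scaledCoveringNumber, scaledCoveringNumber]
  gcongr
  exact externalCoveringNumber_iUnion_le ε A

lemma eventually_sum_scaledCoveringNumber_le_iUnion {ι : Type*} [Fintype ι] (s : ℝ)
    {A : ι → Set X} (hA : Pairwise fun i j => AreSeparated (A i) (A j)) :
    ∀ᶠ ε in 𝓝 0, ∑ i, scaledCoveringNumber s (A i) ε ≤ scaledCoveringNumber s (⋃ i, A i) ε := by
  filter_upwards [eventually_sum_externalCoveringNumber_le_iUnion hA] with ε hε
  rw [sum_scaledCoveringNumber, scaledCoveringNumber]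
  gcongr

lemma scaledCoveringNumber_image_le {f : X → Y} {K : ℝ≥0} (hf : LipschitzWith K f)
    (s : ℝ) (A : Set X) (ε : ℝ≥0) :
    scaledCoveringNumber s (f '' A) (K * ε) ≤ (K : ℝ≥0∞) ^ s * scaledCoveringNumber s A ε := by
  rw [scaledCoveringNumber, scaledCoveringNumber, ENNReal.coe_mul, ENNReal.coe_mul_rpow,
    mul_assoc]
  gcongr
  exact externalCoveringNumber_image_le hf ε A

lemma upperContent_mono (s : ℝ) (h : A ⊆ B) : upperContent s A ≤ upperContent s B :=
  limsup_le_limsup (Eventually.of_forall (scaledCoveringNumber_mono s h))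

lemma upperContent_empty (s : ℝ) : upperContent s (∅ : Set X) = 0 := by
  have hzero : scaledCoveringNumber s (∅ : Set X) = fun _ => ⊥ := by
    ext ε
    simp [scaledCoveringNumber]
  rw [upperContent, hzero, limsup_const_bot, ENNReal.bot_eq_zero]

lemma upperContent_union_le (s : ℝ) (A B : Set X) :
    upperContent s (A ∪ B) ≤ upperContent s A + upperContent s B :=
  (limsup_le_limsup (Eventually.of_forall (scaledCoveringNumber_union_le s A B))).trans
    ennreal_limsup_add_le

lemma upperContent_image_le {f : X → Y} {K : ℝ≥0} (hf : LipschitzWith K f) (hK : K ≠ 0)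
    (s : ℝ) (A : Set X) : upperContent s (f '' A) ≤ (K : ℝ≥0∞) ^ s * upperContent s A := by
  have hmap : 𝓝[>] (0 : ℝ≥0) ≤ map (K * ·) (𝓝[>] 0) := by
    have hdiv : Tendsto (K⁻¹ * ·) (𝓝[>] (0 : ℝ≥0)) (𝓝[>] 0) := by
      refine tendsto_nhdsWithin_iff.2 ⟨?_, ?_⟩
      · have := ((continuous_const_mul K⁻¹).tendsto 0).mono_left (nhdsWithin_le_nhds (s := Ioi 0))
        simpa using this
      · filter_upwards [self_mem_nhdsWithin] with ε hε
        exact mul_pos (inv_pos.2 hK.bot_lt) hε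
    refine le_trans ?_ (map_mono hdiv)
    simp [map_map, Function.comp_def, mul_inv_cancel_left₀ hK]
  calc upperContent s (f '' A)
      ≤ limsup (scaledCoveringNumber s (f '' A)) (map (K * ·) (𝓝[>] 0)) :=
        limsup_le_limsup_of_le hmap
    _ ≤ limsup (fun ε => (K : ℝ≥0∞) ^ s * scaledCoveringNumber s A ε) (𝓝[>] 0) :=
        limsup_le_limsup (Eventually.of_forall (scaledCoveringNumber_image_le hf s A))
    _ = (K : ℝ≥0∞) ^ s * upperContent s A :=
        ENNReal.limsup_const_mul_of_ne_top (by simp [hK])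

lemma escapingContent_le_upperContent_diff (s : ℝ) (hF : IsCompact F) (hFW : F ⊆ W) :
    escapingContent s W A ≤ upperContent s (A \ F) :=
  iInf_le (fun F : {F : Set X // IsCompact F ∧ F ⊆ W} => upperContent s (A \ F)) ⟨F, hF, hFW⟩

lemma escapingContent_le_upperContent (s : ℝ) (W A : Set X) :
    escapingContent s W A ≤ upperContent s A := by
  simpa using escapingContent_le_upperContent_diff (A := A) s isCompact_empty (empty_subset W)

lemma escapingContent_eq_zero (s : ℝ) (hA : IsCompact A) (hAW : A ⊆ W) :
    escapingContent s W A = 0 :=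
  nonpos_iff_eq_zero.1 <| (escapingContent_le_upperContent_diff s hA hAW).trans_eq <| by
    rw [sdiff_self, upperContent_empty]

lemma escapingContent_mono (s : ℝ) (W : Set X) (h : A ⊆ B) :
    escapingContent s W A ≤ escapingContent s W B :=
  iInf_mono fun _ => upperContent_mono s (sdiff_subset_sdiff_left h)

lemma escapingContent_union_le (s : ℝ) (W A B : Set X) :
    escapingContent s W (A ∪ B) ≤ escapingContent s W A + escapingContent s W B := by
  refine ENNReal.le_iInf_add_iInf ?_
  rintro ⟨F, hF, hFW⟩ ⟨F', hF', hFW'⟩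
  refine (escapingContent_le_upperContent_diff s (hF.union hF') (union_subset hFW hFW')).trans ?_
  refine (upperContent_mono s ?_).trans (upperContent_union_le s (A \ F) (B \ F'))
  rw [union_sdiff_distrib]
  exact union_subset_union (sdiff_subset_sdiff_right subset_union_left)
    (sdiff_subset_sdiff_right subset_union_right)

lemma escapingContent_biUnion_le {ι : Type*} (s : ℝ) (W : Set X) (T : Finset ι)
    (A : ι → Set X) :
    escapingContent s W (⋃ i ∈ T, A i) ≤ ∑ i ∈ T, escapingContent s W (A i) :=
  T.apply_union_le_sum (escapingContent_eq_zero s isCompact_empty (empty_subset W))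
    (escapingContent_union_le s W _ _)

lemma escapingContent_image_le {f : X → Y} {K : ℝ≥0} (hf : LipschitzWith K f) (hK : K ≠ 0)
    {W' : Set Y} (hW : f '' W ⊆ W') (s : ℝ) (A : Set X) :
    escapingContent s W' (f '' A) ≤ (K : ℝ≥0∞) ^ s * escapingContent s W A := by
  rw [escapingContent, escapingContent, ENNReal.mul_iInf_of_ne (by simp [hK]) (by simp [hK])]
  refine le_iInf fun ⟨F, hF, hFW⟩ => ?_
  calc escapingContent s W' (f '' A)
      ≤ upperContent s (f '' A \ f '' F) :=
        escapingContent_le_upperContent_diff s (hF.image hf.continuous) ((image_mono hFW).trans hW)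
    _ ≤ upperContent s (f '' (A \ F)) := by
        refine upperContent_mono s ?_
        rintro _ ⟨⟨a, ha, rfl⟩, haF⟩
        exact mem_image_of_mem f ⟨ha, fun h => haF (mem_image_of_mem f h)⟩
    _ ≤ (K : ℝ≥0∞) ^ s * upperContent s (A \ F) := upperContent_image_le hf hK s (A \ F)

lemma sum_le_liminf_scaledCoveringNumber_iUnion {ι : Type*} [Fintype ι] {A F : ι → Set X}
    {h : ι → ℝ≥0∞} (hF : Pairwise fun i j => AreSeparated (F i) (F j))
    (hlim : ∀ i, Tendsto (scaledCoveringNumber s (A i)) (𝓝[>] 0) (𝓝 (h i))) :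
    ∑ i, h i ≤ liminf (scaledCoveringNumber s (⋃ i, A i)) (𝓝[>] 0) +
      ∑ i, upperContent s (A i \ F i) := by
  have hsum : Tendsto (fun ε => ∑ i, scaledCoveringNumber s (A i) ε) (𝓝[>] 0) (𝓝 (∑ i, h i)) :=
    tendsto_finsetSum _ fun i _ => hlim i
  have hle : ∀ᶠ ε in 𝓝[>] (0 : ℝ≥0), ∑ i, scaledCoveringNumber s (A i) ε ≤
      (scaledCoveringNumber s (⋃ i, A i) + ∑ i, scaledCoveringNumber s (A i \ F i)) ε := by
    have hsep : Pairwise fun i j => AreSeparated (A i ∩ F i) (A j ∩ F j) :=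
      fun i j hij => (hF hij).mono inter_subset_right inter_subset_right
    filter_upwards [nhdsWithin_le_nhds (eventually_sum_scaledCoveringNumber_le_iUnion s hsep)]
      with ε hε
    have hsplit (i : ι) : scaledCoveringNumber s (A i) ε ≤
        scaledCoveringNumber s (A i ∩ F i) ε + scaledCoveringNumber s (A i \ F i) ε :=
      (scaledCoveringNumber_mono s (inter_union_sdiff (A i) (F i)).ge ε).trans
        (scaledCoveringNumber_union_le s (A i ∩ F i) (A i \ F i) ε)
    refine (Finset.sum_le_sum fun i _ => hsplit i).trans ?_
    rw [Finset.sum_add_distrib, Pi.add_apply, Finset.sum_apply]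
    exact add_le_add_left (hε.trans
      (scaledCoveringNumber_mono s (iUnion_mono fun i => inter_subset_left) ε)) _
  calc ∑ i, h i
      = liminf (fun ε => ∑ i, scaledCoveringNumber s (A i) ε) (𝓝[>] 0) := hsum.liminf_eq.symm
    _ ≤ liminf (scaledCoveringNumber s (⋃ i, A i) + ∑ i, scaledCoveringNumber s (A i \ F i))
          (𝓝[>] 0) := liminf_le_liminf hle
    _ ≤ liminf (scaledCoveringNumber s (⋃ i, A i)) (𝓝[>] 0) +
          limsup (∑ i, scaledCoveringNumber s (A i \ F i)) (𝓝[>] 0) := ennreal_liminf_add_le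
    _ ≤ _ := add_le_add_right (ennreal_limsup_sum_le _ _) _

lemma tendsto_scaledCoveringNumber_iUnion {ι : Type*} [Fintype ι] [T2Space X] {A W : ι → Set X}
    {h : ι → ℝ≥0∞} (hW : Pairwise fun i j => Disjoint (W i) (W j))
    (hA : ∀ i, escapingContent s (W i) (A i) = 0)
    (hlim : ∀ i, Tendsto (scaledCoveringNumber s (A i)) (𝓝[>] 0) (𝓝 (h i))) :
    Tendsto (scaledCoveringNumber s (⋃ i, A i)) (𝓝[>] 0) (𝓝 (∑ i, h i)) := by
  have hsum : Tendsto (∑ i, scaledCoveringNumber s (A i)) (𝓝[>] 0) (𝓝 (∑ i, h i)) := by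
    simpa only [Finset.sum_fn] using tendsto_finsetSum _ fun i _ => hlim i
  refine tendsto_of_le_liminf_of_limsup_le ?_ ?_
  · refine ENNReal.le_of_forall_pos_le_add fun ε hε _ => ?_
    obtain ⟨δ, hδ, hδε⟩ := ENNReal.exists_pos_sum_of_countable (ENNReal.coe_ne_zero.2 hε.ne') ι
    have hF (i : ι) : ∃ F, IsCompact F ∧ F ⊆ W i ∧ upperContent s (A i \ F) < δ i := by
      have hlt : escapingContent s (W i) (A i) < δ i := (hA i).trans_lt (mod_cast hδ i)
      obtain ⟨⟨F, hF, hFW⟩, hlt⟩ := iInf_lt_iff.1 hlt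
      exact ⟨F, hF, hFW, hlt⟩
    choose F hF hFW hlt using hF
    refine (sum_le_liminf_scaledCoveringNumber_iUnion (F := F) (fun i j hij => ?_) hlim).trans
      (add_le_add_right ?_ _)
    · exact areSeparated_of_isCompact_of_isClosed (hF i) (hF j).isClosed
        ((hW hij).mono (hFW i) (hFW j))
    · calc ∑ i, upperContent s (A i \ F i)
          ≤ ∑ i, (δ i : ℝ≥0∞) := Finset.sum_le_sum fun i _ => (hlt i).le
        _ = ∑' i, (δ i : ℝ≥0∞) := (tsum_fintype _).symm
        _ ≤ ε := hδε.le
  · rw [← hsum.limsup_eq]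
    exact limsup_le_limsup (Eventually.of_forall (scaledCoveringNumber_iUnion_le s A))

end Content

section PerronFrobenius

variable {n : Type*} [Fintype n] {A : Matrix n n ℝ} {x y z : n → ℝ}

lemma mulVec_mono_of_nonneg (hA : ∀ i j, 0 ≤ A i j) (h : x ≤ y) : A *ᵥ x ≤ A *ᵥ y := fun i =>
  Finset.sum_le_sum fun j _ => mul_le_mul_of_nonneg_left (h j) (hA i j)

lemma mulVec_nonneg_of_nonneg (hA : ∀ i j, 0 ≤ A i j) (h : 0 ≤ x) : 0 ≤ A *ᵥ x := by
  simpa using mulVec_mono_of_nonneg hA h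

variable [DecidableEq n]

lemma pow_smul_le_pow_mulVec (hA : ∀ i j, 0 ≤ A i j) {c : ℝ≥0} (h : c • z ≤ A *ᵥ z) (k : ℕ) :
    c ^ k • z ≤ A ^ k *ᵥ z := by
  induction k with
  | zero => simp
  | succ k ih =>
    calc c ^ (k + 1) • z = c ^ k • c • z := by rw [smul_smul, pow_succ]
      _ ≤ c ^ k • A *ᵥ z := smul_le_smul_of_nonneg_left h zero_le
      _ = A *ᵥ (c ^ k • z) := (Matrix.mulVec_smul _ _ _).symm
      _ ≤ A *ᵥ (A ^ k *ᵥ z) := mulVec_mono_of_nonneg hA ih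
      _ = A ^ (k + 1) *ᵥ z := by rw [Matrix.mulVec_mulVec, pow_succ']

attribute [local instance] Matrix.linftyOpNormedRing Matrix.linftyOpNormedAlgebra

lemma le_nnnorm_of_smul_le_mulVec {c : ℝ≥0} (hz : 0 ≤ z) (hz0 : z ≠ 0) (h : c • z ≤ A *ᵥ z) :
    c ≤ ‖A‖₊ := by
  have hle : ‖c • z‖ ≤ ‖A *ᵥ z‖ :=
    (pi_norm_le_iff_of_nonneg (norm_nonneg _)).2 fun i => by
      have hi : 0 ≤ (c • z) i := smul_nonneg c.coe_nonneg (hz i)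
      exact (norm_le_norm_of_abs_le_abs (abs_le_abs_of_nonneg hi (h i))).trans
        (norm_le_pi_norm (A *ᵥ z) i)
  refine le_of_mul_le_mul_right ?_ (nnnorm_pos.2 hz0)
  calc c * ‖z‖₊ = ‖c • z‖₊ := by rw [NNReal.smul_def, nnnorm_smul, NNReal.nnnorm_eq]
    _ ≤ ‖A *ᵥ z‖₊ := hle
    _ ≤ ‖A‖₊ * ‖z‖₊ := Matrix.linfty_opNNNorm_mulVec A z

-- The Collatz–Wielandt lower bound, read off from Gelfand's formula.
lemma le_spectralRadius_of_smul_le_mulVec (hA : ∀ i j, 0 ≤ A i j) {c : ℝ≥0} (hz : 0 ≤ z)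
    (hz0 : z ≠ 0) (h : c • z ≤ A *ᵥ z) : c ≤ spectralRadius ℂ (A.map ((↑) : ℝ → ℂ)) := by
  have hpow (k : ℕ) : c ^ k ≤ ‖(A.map ((↑) : ℝ → ℂ)) ^ k‖₊ := by
    have hmap : (A.map ((↑) : ℝ → ℂ)) ^ k = (A ^ k).map (↑) :=
      (map_pow Complex.ofRealHom.mapMatrix A k).symm
    have hnorm : ‖(A ^ k).map ((↑) : ℝ → ℂ)‖₊ = ‖A ^ k‖₊ := by
      simp [Matrix.linfty_opNNNorm_def]
    rw [hmap, hnorm]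
    exact le_nnnorm_of_smul_le_mulVec hz hz0 (pow_smul_le_pow_mulVec hA h k)
  refine ge_of_tendsto (spectrum.pow_nnnorm_pow_one_div_tendsto_nhds_spectralRadius _) ?_
  filter_upwards [eventually_gt_atTop 0] with k hk
  rw [one_div, ENNReal.le_rpow_inv_iff (Nat.cast_pos.2 hk), ENNReal.rpow_natCast]
  exact mod_cast hpow k

lemma one_lt_spectralRadius_of_lt_mulVec [Nonempty n] (hA : ∀ i j, 0 ≤ A i j) (hz : 0 ≤ z)
    (h : ∀ i, z i < (A *ᵥ z) i) : 1 < spectralRadius ℂ (A.map ((↑) : ℝ → ℂ)) := by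
  have hz0 : z ≠ 0 := by
    rintro rfl
    simpa using h (Classical.arbitrary n)
  have hev : ∀ᶠ c in 𝓝[>] (1 : ℝ≥0), ∀ i, c • z i < (A *ᵥ z) i := by
    refine eventually_all.2 fun i => nhdsWithin_le_nhds ?_
    have ht : Tendsto (fun c : ℝ≥0 => c • z i) (𝓝 1) (𝓝 (z i)) := by
      simpa using (tendsto_id (x := 𝓝 (1 : ℝ≥0))).smul_const (z i)
    exact ht.eventually_lt_const (h i)
  obtain ⟨c, hc, hc1⟩ := (hev.and self_mem_nhdsWithin).exists
  exact (ENNReal.one_lt_coe_iff.2 hc1).trans_le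
    (le_spectralRadius_of_smul_le_mulVec hA hz hz0 fun i => (hc i).le)

lemma exists_sum_pow_apply_pos (hA : A.IsIrreducible) :
    ∃ N : ℕ, ∀ i j, 0 < (∑ m ∈ Finset.range N, A ^ m) i j := by
  choose k _ hk using (Matrix.isIrreducible_iff_exists_pow_pos hA.nonneg).1 hA
  refine ⟨(Finset.univ.sup fun p : n × n => k p.1 p.2) + 1, fun i j => ?_⟩
  rw [Matrix.sum_apply]
  refine Finset.sum_pos' (fun m _ => Matrix.pow_apply_nonneg hA.nonneg m i j)
    ⟨k i j, Finset.mem_range_succ_iff.2 ?_, hk i j⟩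
  exact Finset.le_sup (f := fun p : n × n => k p.1 p.2) (Finset.mem_univ (i, j))

-- If `y = A x - x` were nonzero, `z = ∑ A ^ m x` would satisfy `A z - z = ∑ A ^ m y > 0`
-- in every entry, forcing the spectral radius above one.
lemma mulVec_eq_of_le_mulVec (hA : A.IsIrreducible)
    (hρ : spectralRadius ℂ (A.map ((↑) : ℝ → ℂ)) ≤ 1) (hx : 0 ≤ x) (h : x ≤ A *ᵥ x) :
    A *ᵥ x = x := by
  by_contra hne
  obtain ⟨N, hN⟩ := exists_sum_pow_apply_pos hA
  set P := ∑ m ∈ Finset.range N, A ^ m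
  have hcomm : A * P = P * A := by
    simp only [P, Finset.mul_sum, Finset.sum_mul, ← pow_succ, ← pow_succ']
  obtain ⟨j, hj⟩ : ∃ j, x j < (A *ᵥ x) j := by
    by_contra! hle
    exact hne (le_antisymm hle h)
  have : Nonempty n := ⟨j⟩
  refine hρ.not_gt (one_lt_spectralRadius_of_lt_mulVec hA.nonneg (z := P *ᵥ x)
    (mulVec_nonneg_of_nonneg (fun i l => (hN i l).le) hx) fun i => ?_)
  rw [Matrix.mulVec_mulVec, hcomm, ← Matrix.mulVec_mulVec]
  exact Finset.sum_lt_sum (fun l _ => mul_le_mul_of_nonneg_left (h l) (hN i l).le)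
    ⟨j, Finset.mem_univ j, mul_lt_mul_of_pos_left hj (hN i j)⟩

lemma norm_le_matrixSpectralRadius {m : Type} [Fintype m] [DecidableEq m] {B : Matrix m m ℝ}
    {μ : ℂ} (hμ : μ ∈ spectrum ℂ (B.map ((↑) : ℝ → ℂ))) : ‖μ‖ ≤ matrixSpectralRadius B := by
  refine le_csSup ⟨‖B.map ((↑) : ℝ → ℂ)‖ * ‖(1 : Matrix m m ℂ)‖, ?_⟩ ⟨μ, hμ, rfl⟩
  rintro _ ⟨ν, hν, rfl⟩
  exact spectrum.norm_le_norm_mul_of_mem hν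

lemma spectralRadius_le_ofReal_matrixSpectralRadius {m : Type} [Fintype m] [DecidableEq m]
    (B : Matrix m m ℝ) :
    spectralRadius ℂ (B.map ((↑) : ℝ → ℂ)) ≤ ENNReal.ofReal (matrixSpectralRadius B) :=
  iSup₂_le fun _ hμ =>
    ENNReal.coe_le_coe.2 (NNReal.le_toNNReal_of_coe_le (norm_le_matrixSpectralRadius hμ))

end PerronFrobenius

section ExponentialScale

lemma ennreal_tendsto_ofReal_iff {α : Type*} {l : Filter α} {f : α → ℝ} {a : ℝ}
    (hf : ∀ x, 0 ≤ f x) (ha : 0 ≤ a) :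
    Tendsto (fun x => ENNReal.ofReal (f x)) l (𝓝 (ENNReal.ofReal a)) ↔ Tendsto f l (𝓝 a) := by
  refine ⟨fun h => ?_, ENNReal.tendsto_ofReal⟩
  have h' := (ENNReal.tendsto_toReal ENNReal.ofReal_ne_top).comp h
  simpa only [Function.comp_def, ENNReal.toReal_ofReal, hf, ha] using h'

lemma map_toNNReal_exp_neg_atTop :
    map (fun t : ℝ => (Real.exp (-t)).toNNReal) atTop = 𝓝[>] 0 := by
  have hexp : Tendsto (fun t : ℝ => (Real.exp (-t)).toNNReal) atTop (𝓝[>] 0) := by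
    refine tendsto_nhdsWithin_iff.2 ⟨?_, Eventually.of_forall fun t =>
      Real.toNNReal_pos.2 (Real.exp_pos _)⟩
    simpa using tendsto_real_toNNReal Real.tendsto_exp_neg_atTop_nhds_zero
  have hlog : Tendsto (fun ε : ℝ≥0 => -Real.log ε) (𝓝[>] 0) atTop := by
    refine tendsto_neg_atBot_atTop.comp (Real.tendsto_log_nhdsGT_zero.comp ?_)
    exact tendsto_nhdsWithin_iff.2 ⟨(NNReal.continuous_coe.tendsto 0).mono_left nhdsWithin_le_nhds,
      self_mem_nhdsWithin⟩
  refine le_antisymm hexp ((map_mono hlog).trans' ?_)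
  have hinv : ∀ᶠ ε : ℝ≥0 in 𝓝[>] 0, (Real.exp (-(-Real.log ε))).toNNReal = ε := by
    filter_upwards [self_mem_nhdsWithin] with ε hε
    rw [neg_neg, Real.exp_log (NNReal.coe_pos.2 hε), Real.toNNReal_coe]
  rw [map_map]
  exact ((Filter.map_congr (m₂ := id) hinv).trans map_id).ge

lemma tendsto_setLIntegral_Ici_atTop {f : ℝ → ℝ≥0∞} (hf : ∫⁻ t in Ioi 0, f t ≠ ∞) :
    Tendsto (fun t => ∫⁻ u in Ici t, f u) atTop (𝓝 0) := by
  set ν := (volume.restrict (Ioi (0 : ℝ))).withDensity f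
  have : IsFiniteMeasure ν := isFiniteMeasure_withDensity hf
  have hν : Tendsto (fun t : ℝ => ν (Ici t)) atTop (𝓝 0) := by
    have hInter : (⋂ t : ℝ, Ici t) = ∅ := by
      simpa [iInter_eq_empty_iff] using exists_gt
    simpa only [Function.comp_def, hInter, measure_empty] using
      tendsto_measure_iInter_atTop (μ := ν) (fun t => measurableSet_Ici.nullMeasurableSet)
        antitone_Ici ⟨0, measure_ne_top _ _⟩
  refine hν.congr' ?_
  filter_upwards [eventually_gt_atTop 0] with t ht
  rw [withDensity_apply _ measurableSet_Ici, Measure.restrict_restrict measurableSet_Ici,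
    inter_eq_left.2 (Ici_subset_Ioi.2 ht)]

-- If `f` cannot drop by more than a factor `c` within unit time, `c * f t` is at most the
-- integral of `f` over `[t, t + 1]`, hence at most a tail of a convergent integral.
lemma tendsto_zero_of_forall_Icc_mul_le {f : ℝ → ℝ≥0∞} {c : ℝ≥0} (hc : c ≠ 0)
    (hmul : ∀ t, ∀ u ∈ Icc t (t + 1), c * f t ≤ f u) (hf : ∫⁻ t in Ioi 0, f t ≠ ∞) :
    Tendsto f atTop (𝓝 0) := by
  have hc' : (c : ℝ≥0∞) ≠ 0 := ENNReal.coe_ne_zero.2 hc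
  have htail := ENNReal.Tendsto.const_mul (tendsto_setLIntegral_Ici_atTop hf)
    (.inr (ENNReal.inv_ne_top.2 hc'))
  rw [mul_zero] at htail
  refine tendsto_of_tendsto_of_tendsto_of_le_of_le tendsto_const_nhds htail
    (fun _ => zero_le) fun t => ?_
  rw [← ENNReal.mul_le_iff_le_inv hc' ENNReal.coe_ne_top]
  calc c * f t
      = ∫⁻ _ in Icc t (t + 1), c * f t := by simp
    _ ≤ ∫⁻ u in Icc t (t + 1), f u := setLIntegral_mono' measurableSet_Icc (hmul t)
    _ ≤ ∫⁻ u in Ici t, f u := lintegral_mono_set Icc_subset_Ici_self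

variable {d : ℕ} {A : Set (Pt d)}

lemma natCast_coveringNumber (hA : Bornology.IsBounded A) {r : ℝ} (hr : 0 < r) :
    (coveringNumber A r : ℕ∞) = externalCoveringNumber r.toNNReal A := by
  have hcover (N : Set (Pt d)) : IsCover r.toNNReal A N ↔ A ⊆ ⋃ x ∈ N, closedBall x r := by
    rw [isCover_iff_subset_iUnion_closedBall, Real.coe_toNNReal r hr.le]
  have hmem {N : Set (Pt d)} (hN : IsCover r.toNNReal A N) (hfin : N.Finite) :
      N.ncard ∈ {k : ℕ | ∃ c : Fin k → Pt d, A ⊆ ⋃ i, closedBall (c i) r} := by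
    have := hfin.to_subtype
    let e : N ≃ Fin N.ncard := Finite.equivFinOfCardEq rfl
    refine ⟨fun k => e.symm k, fun a ha => ?_⟩
    obtain ⟨x, hx, hax⟩ := mem_iUnion₂.1 ((hcover N).1 hN ha)
    exact mem_iUnion.2 ⟨e ⟨x, hx⟩, by simpa using hax⟩
  refine le_antisymm (le_iInf₂ fun N hN => ?_) ?_
  · rcases N.finite_or_infinite with hfin | hinf
    · rw [← hfin.cast_ncard_eq]
      exact mod_cast Nat.sInf_le (hmem hN hfin)
    · simp [hinf.encard_eq]
  · obtain ⟨N, -, hfin, hN⟩ := exists_finite_isCover_of_totallyBounded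
      (Real.toNNReal_pos.2 hr).ne' (hA.isCompact_closure.totallyBounded.subset subset_closure)
    obtain ⟨c, hc⟩ := Nat.sInf_mem ⟨_, hmem hN hfin⟩
    have hrange : IsCover r.toNNReal A (range c) := (hcover _).2 (by rwa [biUnion_range])
    calc externalCoveringNumber r.toNNReal A
        ≤ (range c).encard := hrange.externalCoveringNumber_le_encard
      _ ≤ (univ : Set (Fin (coveringNumber A r))).encard := image_univ ▸ encard_image_le c univ
      _ = coveringNumber A r := by simp

lemma ofReal_exp_mul_coveringNumber (hA : Bornology.IsBounded A) (s t : ℝ) :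
    ENNReal.ofReal (Real.exp (-s * t) * (coveringNumber A (Real.exp (-t)) : ℝ)) =
      scaledCoveringNumber s A (Real.exp (-t)).toNNReal := by
  rw [scaledCoveringNumber, ← natCast_coveringNumber hA (Real.exp_pos _),
    ENNReal.ofReal_mul (Real.exp_pos _).le, ENNReal.ofReal_natCast, ENat.toENNReal_coe]
  congr 1
  rw [← ENNReal.ofReal, ENNReal.ofReal_rpow_of_pos (Real.exp_pos _), ← Real.exp_mul]
  ring_nf

lemma tendsto_scaledCoveringNumber_iff (hA : Bornology.IsBounded A) {s a : ℝ} (ha : 0 ≤ a) :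
    Tendsto (scaledCoveringNumber s A) (𝓝[>] 0) (𝓝 (ENNReal.ofReal a)) ↔
      Tendsto (fun t : ℝ => Real.exp (-s * t) * (coveringNumber A (Real.exp (-t)) : ℝ)) atTop
        (𝓝 a) := by
  rw [← ennreal_tendsto_ofReal_iff (fun t => by positivity) ha, ← map_toNNReal_exp_neg_atTop,
    tendsto_map'_iff]
  simp only [ofReal_exp_mul_coveringNumber hA, Function.comp_def]

lemma tendsto_exp_mul_coveringNumber_of_lintegral_ne_top (hA : Bornology.IsBounded A) {s : ℝ}
    (hint : ∫⁻ t in Ioi (0 : ℝ),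
      ENNReal.ofReal (Real.exp (-s * t) * (coveringNumber A (Real.exp (-t)) : ℝ)) ≠ ∞) :
    Tendsto (fun t : ℝ => Real.exp (-s * t) * (coveringNumber A (Real.exp (-t)) : ℝ)) atTop
      (𝓝 0) := by
  have hexp (t : ℝ) : 0 ≤ Real.exp (-s * t) * (coveringNumber A (Real.exp (-t)) : ℝ) := by
    positivity
  rw [← ennreal_tendsto_ofReal_iff hexp le_rfl, ENNReal.ofReal_zero]
  refine tendsto_zero_of_forall_Icc_mul_le (Real.toNNReal_pos.2 (Real.exp_pos (-|s|))).ne'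
    (fun t u hu => ?_) hint
  have hdrop : Real.exp (-|s|) * Real.exp (-s * t) ≤ Real.exp (-s * u) := by
    rw [← Real.exp_add]
    refine Real.exp_le_exp.2 ?_
    have : s * (u - t) ≤ |s| * 1 :=
      mul_le_mul (le_abs_self s) (by linarith [hu.2]) (sub_nonneg.2 hu.1) (abs_nonneg s)
    linarith
  have hanti : coveringNumber A (Real.exp (-t)) ≤ coveringNumber A (Real.exp (-u)) := by
    rw [← Nat.cast_le (α := ℕ∞), natCast_coveringNumber hA (Real.exp_pos _),
      natCast_coveringNumber hA (Real.exp_pos _)]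
    exact externalCoveringNumber_anti
      (Real.toNNReal_le_toNNReal (Real.exp_le_exp.2 (neg_le_neg hu.1)))
  rw [← ENNReal.ofReal, ← ENNReal.ofReal_mul (Real.exp_pos _).le, ← mul_assoc]
  gcongr

lemma tendsto_exp_neg_mul_of_tendsto_div {f : ℝ → ℝ} {s h : ℝ} (hh : h ≠ 0)
    (hf : Tendsto (fun t => f t / (h * Real.exp (s * t))) atTop (𝓝 1)) :
    Tendsto (fun t => Real.exp (-s * t) * f t) atTop (𝓝 h) := by
  have hmul := hf.const_mul h
  rw [mul_one] at hmul
  refine hmul.congr fun t => ?_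
  rw [neg_mul, Real.exp_neg]
  field_simp

end ExponentialScale

namespace MWGraph

section Paths

variable {d : ℕ} {V E : Type} [Fintype V] [Fintype E] (G : MWGraph d V E)

lemma ofReal_r_rpow_ne_zero (s : ℝ) (e : E) : ENNReal.ofReal (G.r e) ^ s ≠ 0 :=
  (ENNReal.rpow_pos (ENNReal.ofReal_pos.2 (G.r_pos e)) ENNReal.ofReal_ne_top).ne'

lemma ofReal_r_rpow_ne_top (s : ℝ) (e : E) : ENNReal.ofReal (G.r e) ^ s ≠ ∞ := by
  simp [ENNReal.ofReal_rpow_of_pos (G.r_pos e)]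

lemma pathRatio_cons (e : E) (γ : List E) : G.pathRatio (e :: γ) = G.r e * G.pathRatio γ := by
  simp [pathRatio]

lemma image_pathMap_cons (e : E) (γ : List E) (A : Set (Pt d)) :
    G.pathMap (e :: γ) '' A = G.S e '' (G.pathMap γ '' A) :=
  image_comp _ _ A

lemma pathRatio_pos (γ : List E) : 0 < G.pathRatio γ := by
  induction γ with
  | nil => simp [pathRatio]
  | cons e γ ih => rw [pathRatio_cons]; exact mul_pos (G.r_pos e) ih

lemma pathRatio_le_pow {q : ℝ} (hq : ∀ e, G.r e ≤ q) (γ : List E) :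
    G.pathRatio γ ≤ q ^ γ.length := by
  induction γ with
  | nil => simp [pathRatio]
  | cons e γ ih =>
    rw [pathRatio_cons, List.length_cons, pow_succ']
    exact mul_le_mul (hq e) ih (G.pathRatio_pos γ).le ((G.r_pos e).le.trans (hq e))

lemma exists_forall_r_le : ∃ q : ℝ, 0 ≤ q ∧ q < 1 ∧ ∀ e, G.r e ≤ q := by
  rcases isEmpty_or_nonempty E with hE | hE
  · exact ⟨0, le_rfl, one_pos, isEmptyElim⟩
  · obtain ⟨e, he⟩ := Finite.exists_max G.r
    exact ⟨G.r e, (G.r_pos e).le, G.r_lt_one e, he⟩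

lemma lipschitzWith_S (e : E) : LipschitzWith (G.r e).toNNReal (G.S e) :=
  LipschitzWith.of_dist_le_mul fun x y => by
    rw [G.S_sim, Real.coe_toNNReal _ (G.r_pos e).le]

lemma dist_pathMap (γ : List E) (x y : Pt d) :
    dist (G.pathMap γ x) (G.pathMap γ y) = G.pathRatio γ * dist x y := by
  induction γ with
  | nil => simp [pathMap, pathRatio]
  | cons e γ ih =>
    rw [pathRatio_cons, mul_assoc, ← ih]
    exact G.S_sim e _ _

lemma continuous_pathMap (γ : List E) : Continuous (G.pathMap γ) := by
  induction γ with
  | nil => exact continuous_id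
  | cons e γ ih => exact (G.lipschitzWith_S e).continuous.comp ih

variable {G} {K : V → Set (Pt d)}

lemma IsAttractor.exists_path (hK : G.IsAttractor K) (n : ℕ) {i : V} {x : Pt d} (hx : x ∈ K i) :
    ∃ γ : List E, γ.length = n ∧ G.IsPathFrom i γ ∧ x ∈ G.pathMap γ '' K (G.pathTerm i γ) := by
  induction n generalizing i x with
  | zero => exact ⟨[], rfl, trivial, x, hx, rfl⟩
  | succ n ih =>
    rw [hK.2.2 i] at hx
    obtain ⟨e, he, y, hy, rfl⟩ := mem_iUnion₂.1 hx
    obtain ⟨γ, hlen, hpath, z, hz, rfl⟩ := ih hy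
    exact ⟨e :: γ, by simp [hlen], ⟨he, hpath⟩, z, hz, rfl⟩

lemma IsAttractor.exists_path_image_subset (hK : G.IsAttractor K) {L : V → Set (Pt d)}
    (hL : ∀ i, Bornology.IsBounded (L i)) {W : Set (Pt d)} (hW : IsOpen W) {i : V}
    (hWK : (W ∩ K i).Nonempty) :
    ∃ γ : List E, G.IsPathFrom i γ ∧ G.pathMap γ '' L (G.pathTerm i γ) ⊆ W := by
  obtain ⟨x, hxW, hxK⟩ := hWK
  obtain ⟨ε, hε, hball⟩ := Metric.isOpen_iff.1 hW x hxW
  obtain ⟨q, hq0, hq1, hq⟩ := G.exists_forall_r_le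
  obtain ⟨M, hM⟩ : ∃ M, ∀ j, ∀ y ∈ L j, ∀ z ∈ K j, dist y z ≤ M := by
    obtain ⟨M, hM⟩ := Metric.isBounded_iff.1
      ((Bornology.isBounded_iUnion.2 hL).union (isCompact_iUnion hK.1).isBounded)
    exact ⟨M, fun j y hy z hz => hM (.inl (mem_iUnion_of_mem j hy)) (.inr (mem_iUnion_of_mem j hz))⟩
  have hlim : Tendsto (fun n : ℕ => q ^ n * M) atTop (𝓝 0) := by
    simpa using (tendsto_pow_atTop_nhds_zero_of_lt_one hq0 hq1).mul_const M
  obtain ⟨n, hn⟩ := (hlim.eventually_lt_const hε).exists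
  obtain ⟨γ, rfl, hpath, z, hz, rfl⟩ := hK.exists_path n hxK
  refine ⟨γ, hpath, ?_⟩
  rintro _ ⟨y, hy, rfl⟩
  refine hball ?_
  rw [mem_ball, dist_pathMap]
  calc G.pathRatio γ * dist y z ≤ q ^ γ.length * M :=
        mul_le_mul (G.pathRatio_le_pow hq γ) (hM _ y hy z hz) dist_nonneg (pow_nonneg hq0 _)
    _ < ε := hn

lemma IsInhomAttractor.eq_biUnion_union [DecidableEq V] {C KC : V → Set (Pt d)}
    (hKC : G.IsInhomAttractor C KC) (i : V) :
    KC i = (⋃ e ∈ ({e | G.init e = i} : Finset E), G.S e '' KC (G.term e)) ∪ C i := by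
  simpa using hKC.2.2 i

lemma IsInhomAttractor.condensation_subset {C KC : V → Set (Pt d)}
    (hKC : G.IsInhomAttractor C KC) (i : V) : C i ⊆ KC i := by
  rw [hKC.2.2 i]
  exact subset_union_right

lemma IsOSCWith.image_subset {U : V → Set (Pt d)} (hU : G.IsOSCWith U) (e : E) :
    G.S e '' U (G.term e) ⊆ U (G.init e) :=
  iUnion₂_subset_iff.1 (hU.2.2.2.2.1 (G.init e)) e rfl

lemma IsOSCWith.subset_interior {U : V → Set (Pt d)} (hU : G.IsOSCWith U) (i : V) :
    U i ⊆ interior (G.X i) :=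
  interior_maximal (hU.2.2.2.1 i) (hU.2.1 i)

end Paths

section Transfer

variable {d : ℕ} {V E : Type} [Fintype V] [Fintype E] [DecidableEq V] (G : MWGraph d V E)

lemma Amatrix_nonneg (s : ℝ) (i j : V) : 0 ≤ G.Amatrix s i j := by
  refine Finset.sum_nonneg fun e _ => ?_
  split_ifs
  · exact (Real.rpow_pos_of_pos (G.r_pos e) s).le
  · exact le_rfl

lemma Amatrix_apply_pos (s : ℝ) (e : E) : 0 < G.Amatrix s (G.init e) (G.term e) := by
  have hr (e : E) : 0 < G.r e ^ s := Real.rpow_pos_of_pos (G.r_pos e) s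
  refine Finset.sum_pos' (fun e' _ => ?_) ⟨e, Finset.mem_univ e, by simpa using hr e⟩
  split_ifs
  · exact (hr e').le
  · exact le_rfl

lemma Amatrix_pow_apply_pos (s : ℝ) {γ : List E} {i : V} (hγ : G.IsPathFrom i γ) :
    0 < (G.Amatrix s ^ γ.length) i (G.pathTerm i γ) := by
  induction γ generalizing i with
  | nil => simp [pathTerm]
  | cons e γ ih =>
    obtain ⟨rfl, hγ⟩ := hγ
    rw [List.length_cons, pow_succ', Matrix.mul_apply]
    exact Finset.sum_pos' (fun l _ => mul_nonneg (G.Amatrix_nonneg s _ l)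
        (Matrix.pow_apply_nonneg (G.Amatrix_nonneg s) _ l _))
      ⟨G.term e, Finset.mem_univ _, mul_pos (G.Amatrix_apply_pos s e) (ih hγ)⟩

variable {G} in
lemma StronglyConnected.isIrreducible_Amatrix (hSC : G.StronglyConnected) (s : ℝ) :
    (G.Amatrix s).IsIrreducible := by
  refine (Matrix.isIrreducible_iff_exists_pow_pos (G.Amatrix_nonneg s)).2 fun i j => ?_
  obtain ⟨γ, hne, hγ, rfl⟩ := hSC i j
  exact ⟨γ.length, List.length_pos_iff.2 hne, G.Amatrix_pow_apply_pos s hγ⟩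

lemma Amatrix_mulVec (s : ℝ) (x : V → ℝ) (i : V) :
    (G.Amatrix s *ᵥ x) i = ∑ e with G.init e = i, G.r e ^ s * x (G.term e) := by
  simp only [Matrix.mulVec, dotProduct, Amatrix, Matrix.of_apply, Finset.sum_mul]
  rw [Finset.sum_comm, Finset.sum_filter]
  refine Finset.sum_congr rfl fun e _ => ?_
  by_cases he : G.init e = i <;> simp [he]

/-- The action of the matrix `A_G^s` on vectors with entries in `[0, ∞]`. -/
def transfer (s : ℝ) (D : V → ℝ≥0∞) (i : V) : ℝ≥0∞ :=
  ∑ e with G.init e = i, ENNReal.ofReal (G.r e) ^ s * D (G.term e)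

variable {D : V → ℝ≥0∞} {s : ℝ}

lemma transfer_ne_top (s : ℝ) (hD : ∀ i, D i ≠ ∞) (i : V) : G.transfer s D i ≠ ∞ :=
  ENNReal.sum_ne_top.2 fun e _ => ENNReal.mul_ne_top (G.ofReal_r_rpow_ne_top s e) (hD _)

lemma toReal_transfer (s : ℝ) (hD : ∀ i, D i ≠ ∞) (i : V) :
    (G.transfer s D i).toReal = (G.Amatrix s *ᵥ fun j => (D j).toReal) i := by
  rw [Amatrix_mulVec, transfer, ENNReal.toReal_sum fun e _ =>
    ENNReal.mul_ne_top (G.ofReal_r_rpow_ne_top s e) (hD _)]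
  refine Finset.sum_congr rfl fun e _ => ?_
  rw [ENNReal.toReal_mul, ← ENNReal.toReal_rpow, ENNReal.toReal_ofReal (G.r_pos e).le]

variable {G}

lemma transfer_eq_of_le (hSC : G.StronglyConnected) (hρ : matrixSpectralRadius (G.Amatrix s) ≤ 1)
    (hD : ∀ i, D i ≠ ∞) (hle : D ≤ G.transfer s D) : G.transfer s D = D := by
  have hρ' : spectralRadius ℂ ((G.Amatrix s).map ((↑) : ℝ → ℂ)) ≤ 1 :=
    (spectralRadius_le_ofReal_matrixSpectralRadius _).trans (ENNReal.ofReal_le_one.2 hρ)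
  have hsub : (fun i => (D i).toReal) ≤ G.Amatrix s *ᵥ fun i => (D i).toReal := fun i => by
    rw [← G.toReal_transfer s hD]
    exact ENNReal.toReal_mono (G.transfer_ne_top s hD i) (hle i)
  have heq := mulVec_eq_of_le_mulVec (hSC.isIrreducible_Amatrix s) hρ'
    (fun i => ENNReal.toReal_nonneg) hsub
  ext i
  rw [← ENNReal.toReal_eq_toReal_iff' (G.transfer_ne_top s hD i) (hD i), G.toReal_transfer s hD,
    heq]

lemma eq_zero_of_isPathFrom (hinv : G.transfer s D = D) {γ : List E} {i : V}
    (hγ : G.IsPathFrom i γ) (hi : D i = 0) : D (G.pathTerm i γ) = 0 := by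
  induction γ generalizing i with
  | nil => exact hi
  | cons e γ ih =>
    refine ih hγ.2 ?_
    rw [← hinv, transfer, Finset.sum_eq_zero_iff] at hi
    exact (mul_eq_zero.1 (hi e (by simpa using hγ.1))).resolve_left (G.ofReal_r_rpow_ne_zero s e)

end Transfer

section EscapingContent

variable {d : ℕ} {V E : Type} [Fintype V] [Fintype E] {G : MWGraph d V E}
  {C K KC U : V → Set (Pt d)} {s : ℝ}

lemma escapingContent_image_S_le (hSU : ∀ e, G.S e '' U (G.term e) ⊆ U (G.init e)) (s : ℝ) (e : E)
    (B : Set (Pt d)) : escapingContent s (U (G.init e)) (G.S e '' B) ≤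
      ENNReal.ofReal (G.r e) ^ s * escapingContent s (U (G.term e)) B :=
  escapingContent_image_le (G.lipschitzWith_S e) (Real.toNNReal_pos.2 (G.r_pos e)).ne' (hSU e) s B

lemma escapingContent_biUnion_union_le (hSU : ∀ e, G.S e '' U (G.term e) ⊆ U (G.init e))
    {A : Set (Pt d)} (hA : upperContent s A = 0) {i : V} {T : Finset E}
    (hT : ∀ e ∈ T, G.init e = i) (B : V → Set (Pt d)) :
    escapingContent s (U i) ((⋃ e ∈ T, G.S e '' B (G.term e)) ∪ A) ≤
      ∑ e ∈ T, ENNReal.ofReal (G.r e) ^ s * escapingContent s (U (G.term e)) (B (G.term e)) := by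
  have hA' : escapingContent s (U i) A = 0 :=
    nonpos_iff_eq_zero.1 ((escapingContent_le_upperContent s (U i) A).trans_eq hA)
  refine (escapingContent_union_le s _ _ _).trans ?_
  rw [hA', add_zero]
  refine (escapingContent_biUnion_le s _ T _).trans (Finset.sum_le_sum fun e he => ?_)
  obtain rfl := hT e he
  exact escapingContent_image_S_le hSU s e _

variable [DecidableEq V]

lemma IsInhomAttractor.escapingContent_le_transfer (hKC : G.IsInhomAttractor C KC)
    (hSU : ∀ e, G.S e '' U (G.term e) ⊆ U (G.init e)) (hC : ∀ i, upperContent s (C i) = 0) :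
    (fun i => escapingContent s (U i) (KC i)) ≤
      G.transfer s fun i => escapingContent s (U i) (KC i) := fun i =>
  (escapingContent_mono s (U i) (hKC.eq_biUnion_union i).le).trans
    (escapingContent_biUnion_union_le hSU (hC i) (by simp) KC)

lemma IsInhomAttractor.escapingContent_diff_image_S_add_le (hKC : G.IsInhomAttractor C KC)
    (hSU : ∀ e, G.S e '' U (G.term e) ⊆ U (G.init e)) {e : E}
    (hC : upperContent s (C (G.init e)) = 0) (B : Set (Pt d)) :
    escapingContent s (U (G.init e)) (KC (G.init e) \ G.S e '' B) +
        ENNReal.ofReal (G.r e) ^ s * escapingContent s (U (G.term e)) (KC (G.term e)) ≤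
      ENNReal.ofReal (G.r e) ^ s * escapingContent s (U (G.term e)) (KC (G.term e) \ B) +
        G.transfer s (fun i => escapingContent s (U i) (KC i)) (G.init e) := by
  classical
  set T : Finset E := {e' | G.init e' = G.init e}
  have heT : e ∈ T := by simp [T]
  have hsub : KC (G.init e) \ G.S e '' B ⊆ G.S e '' (KC (G.term e) \ B) ∪
      ((⋃ e' ∈ T.erase e, G.S e' '' KC (G.term e')) ∪ C (G.init e)) := by
    rintro x ⟨hx, hxB⟩
    rw [hKC.eq_biUnion_union (G.init e)] at hx
    rcases hx with hx | hx
    · obtain ⟨e', he', y, hy, rfl⟩ := mem_iUnion₂.1 hx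
      rcases eq_or_ne e' e with rfl | hne
      · exact .inl ⟨y, ⟨hy, fun hyB => hxB ⟨y, hyB, rfl⟩⟩, rfl⟩
      · exact .inr (.inl (mem_iUnion₂.2 ⟨e', Finset.mem_erase.2 ⟨hne, he'⟩, y, hy, rfl⟩))
    · exact .inr (.inr hx)
  rw [transfer, ← Finset.sum_erase_add T _ heT, ← add_assoc]
  gcongr
  calc escapingContent s (U (G.init e)) (KC (G.init e) \ G.S e '' B)
      ≤ escapingContent s (U (G.init e)) (G.S e '' (KC (G.term e) \ B)) +
          escapingContent s (U (G.init e))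
            ((⋃ e' ∈ T.erase e, G.S e' '' KC (G.term e')) ∪ C (G.init e)) :=
        (escapingContent_mono s _ hsub).trans (escapingContent_union_le s _ _ _)
    _ ≤ _ := add_le_add (escapingContent_image_S_le hSU s e _)
        (escapingContent_biUnion_union_le hSU hC (by simp [T]) KC)

lemma IsInhomAttractor.escapingContent_diff_image_pathMap_add_le
    (hKC : G.IsInhomAttractor C KC) (hSU : ∀ e, G.S e '' U (G.term e) ⊆ U (G.init e))
    (hC : ∀ i, upperContent s (C i) = 0) (hfin : ∀ i, upperContent s (KC i) ≠ ∞)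
    (hinv : G.transfer s (fun i => escapingContent s (U i) (KC i)) =
      fun i => escapingContent s (U i) (KC i)) {γ : List E} {i : V} (hγ : G.IsPathFrom i γ) :
    escapingContent s (U i) (KC i \ G.pathMap γ '' KC (G.pathTerm i γ)) +
        ENNReal.ofReal (G.pathRatio γ) ^ s *
          escapingContent s (U (G.pathTerm i γ)) (KC (G.pathTerm i γ)) ≤
      escapingContent s (U i) (KC i) := by
  induction γ generalizing i with
  | nil =>
    have hdiff : KC i \ G.pathMap [] '' KC i = ∅ := by simp [pathMap]
    simp only [pathTerm, hdiff, escapingContent_eq_zero s isCompact_empty (empty_subset _)]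
    simp [pathRatio]
  | cons e γ ih =>
    obtain ⟨rfl, hγ⟩ := hγ
    set B := G.pathMap γ '' KC (G.pathTerm (G.term e) γ)
    have hB : escapingContent s (U (G.term e)) (KC (G.term e) \ B) ≠ ∞ :=
      ne_top_of_le_ne_top (hfin _)
        ((escapingContent_le_upperContent s _ _).trans (upperContent_mono s sdiff_subset))
    have hedge := hKC.escapingContent_diff_image_S_add_le hSU (hC (G.init e)) B
    rw [hinv] at hedge
    have hstep := (add_le_add_right
      (mul_le_mul_right (ih hγ) (ENNReal.ofReal (G.r e) ^ s)) _).trans hedge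
    refine ENNReal.le_of_add_le_add_left
      (ENNReal.mul_ne_top (G.ofReal_r_rpow_ne_top s e) hB) (le_trans (le_of_eq ?_) hstep)
    rw [pathTerm, image_pathMap_cons, pathRatio_cons, ENNReal.ofReal_mul (G.r_pos e).le,
      ENNReal.mul_rpow_of_ne_top ENNReal.ofReal_ne_top ENNReal.ofReal_ne_top]
    ring

theorem IsInhomAttractor.escapingContent_eq_zero (hSC : G.StronglyConnected)
    (hK : G.IsAttractor K) (hKC : G.IsInhomAttractor C KC) (hU : ∀ i, IsOpen (U i))
    (hSU : ∀ e, G.S e '' U (G.term e) ⊆ U (G.init e)) (hUK : ∀ i, (U i ∩ K i).Nonempty)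
    (hρ : matrixSpectralRadius (G.Amatrix s) ≤ 1) (hC : ∀ i, upperContent s (C i) = 0)
    (hfin : ∀ i, upperContent s (KC i) ≠ ∞) (i : V) : escapingContent s (U i) (KC i) = 0 := by
  have hD (j : V) : escapingContent s (U j) (KC j) ≠ ∞ :=
    ne_top_of_le_ne_top (hfin j) (escapingContent_le_upperContent s _ _)
  have hinv := transfer_eq_of_le hSC hρ hD (hKC.escapingContent_le_transfer hSU hC)
  obtain ⟨γ, hγ, hγU⟩ :=
    hK.exists_path_image_subset (fun j => (hKC.1 j).isBounded) (hU i) (hUK i)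
  set F := G.pathMap γ '' KC (G.pathTerm i γ)
  have hFzero : escapingContent s (U i) F = 0 :=
    _root_.escapingContent_eq_zero s ((hKC.1 _).image (G.continuous_pathMap γ)) hγU
  have hdiff : escapingContent s (U i) (KC i) ≤ escapingContent s (U i) (KC i \ F) := by
    calc escapingContent s (U i) (KC i)
        ≤ escapingContent s (U i) ((KC i \ F) ∪ F) :=
          escapingContent_mono s _ (by simp)
      _ ≤ escapingContent s (U i) (KC i \ F) + escapingContent s (U i) F :=
          escapingContent_union_le s _ _ _
      _ = escapingContent s (U i) (KC i \ F) := by rw [hFzero, add_zero]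
  have hterm : escapingContent s (U (G.pathTerm i γ)) (KC (G.pathTerm i γ)) = 0 := by
    have hle := (add_le_add_left hdiff _).trans
      (hKC.escapingContent_diff_image_pathMap_add_le hSU hC hfin hinv hγ)
    have hmul := nonpos_iff_eq_zero.1
      (ENNReal.le_of_add_le_add_left (hD i) (hle.trans_eq (add_zero _).symm))
    refine (mul_eq_zero.1 hmul).resolve_left ?_
    exact (ENNReal.rpow_pos (ENNReal.ofReal_pos.2 (G.pathRatio_pos γ)) ENNReal.ofReal_ne_top).ne'
  obtain ⟨γ', -, hγ', hi⟩ := hSC (G.pathTerm i γ) i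
  exact hi ▸ eq_zero_of_isPathFrom hinv hγ' hterm

end EscapingContent

end MWGraph

theorem stmt1_general {d : ℕ} {V E : Type} [Fintype V] [Fintype E] [DecidableEq V]
    {G : MWGraph d V E} (hSC : G.StronglyConnected) {C K KC U : V → Set (Pt d)}
    (hK : G.IsAttractor K) (hKC : G.IsInhomAttractor C KC) (hU : ∀ i, IsOpen (U i))
    (hSU : ∀ e, G.S e '' U (G.term e) ⊆ U (G.init e)) (hUK : ∀ i, (U i ∩ K i).Nonempty)
    (hdisj : Pairwise fun i j => Disjoint (U i) (U j)) {s : ℝ}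
    (hρ : matrixSpectralRadius (G.Amatrix s) ≤ 1)
    (hC : ∀ i, Tendsto (fun t : ℝ =>
      Real.exp (-s * t) * (coveringNumber (C i) (Real.exp (-t)) : ℝ)) atTop (𝓝 0))
    {h : V → ℝ} (hlim : ∀ i, Tendsto (fun t : ℝ =>
      Real.exp (-s * t) * (coveringNumber (KC i) (Real.exp (-t)) : ℝ)) atTop (𝓝 (h i))) :
    Tendsto (fun t : ℝ => Real.exp (-s * t) *
      (coveringNumber (⋃ i : V, KC i) (Real.exp (-t)) : ℝ)) atTop (𝓝 (∑ i : V, h i)) := by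
  have hbdd (i : V) : Bornology.IsBounded (KC i) := (hKC.1 i).isBounded
  have hpos (i : V) : 0 ≤ h i := ge_of_tendsto' (hlim i) fun t => by positivity
  have hlim' (i : V) := (tendsto_scaledCoveringNumber_iff (hbdd i) (hpos i)).2 (hlim i)
  have hC' (i : V) : upperContent s (C i) = 0 := by
    have hCi := (hbdd i).subset (hKC.condensation_subset i)
    exact ((tendsto_scaledCoveringNumber_iff hCi le_rfl).2
      (hC i)).limsup_eq.trans ENNReal.ofReal_zero
  have hfin (i : V) : upperContent s (KC i) ≠ ∞ := by
    rw [upperContent, (hlim' i).limsup_eq]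
    exact ENNReal.ofReal_ne_top
  rw [← tendsto_scaledCoveringNumber_iff (Bornology.isBounded_iUnion.2 hbdd)
    (Finset.sum_nonneg fun i _ => hpos i), ENNReal.ofReal_sum_of_nonneg fun i _ => hpos i]
  exact tendsto_scaledCoveringNumber_iUnion hdisj
    (hKC.escapingContent_eq_zero hSC hK hU hSU hUK hρ hC' hfin) hlim'

theorem stmt1 {d : ℕ} {V E : Type} [Fintype V] [Fintype E] [DecidableEq V]
    (G : MWGraph d V E) (hSC : G.StronglyConnected)
    (C K KC U : V → Set (Pt d))
    (hC : G.IsCondensation C) (hK : G.IsAttractor K) (hKC : G.IsInhomAttractor C KC)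
    (hU : G.IsOSCWith U) (hUK : ∀ i, (U i ∩ K i).Nonempty)
    (hCU : ∀ i, C i ⊆ closure (U i))
    (s0 : ℝ) (hs0 : IsS0 G s0)
    (hint : ∀ i : V, ∫⁻ t in Set.Ioi (0 : ℝ),
      ENNReal.ofReal (Real.exp (-s0 * t) * (coveringNumber (C i) (Real.exp (-t)) : ℝ)) < ⊤)
    (hX : Pairwise fun i j : V => Disjoint (interior (G.X i)) (interior (G.X j)))
    (hGM : G.GM = Set.univ)
    (h : V → ℝ) (hpos : ∀ i, 0 < h i)
    (hlim : ∀ i : V, Tendsto (fun t : ℝ => (coveringNumber (KC i) (Real.exp (-t)) : ℝ) /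
      (h i * Real.exp (s0 * t))) atTop (𝓝 1)) :
    Tendsto (fun t : ℝ => Real.exp (-s0 * t) *
      (coveringNumber (⋃ i : V, KC i) (Real.exp (-t)) : ℝ)) atTop (𝓝 (∑ i : V, h i)) := by
  exact stmt1_general hSC hK hKC hU.2.1 hU.image_subset hUK
    (fun i j hij => (hX hij).mono (hU.subset_interior i) (hU.subset_interior j)) hs0.2.le
    (fun i => tendsto_exp_mul_coveringNumber_of_lintegral_ne_top (hC i).1.isBounded (hint i).ne)
    fun i => tendsto_exp_neg_mul_of_tendsto_div (hpos i).ne' (hlim i)
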